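/- arXiv:1811.05946 — 9 statements merged into one kernel-verified Lean document; each statement's English description precedes it below -/
import Mathlib

section
/- Let G be a finite group, H a subgroup of G, and X = G/H the transitive G-set of left cosets of H. Regard X as a groupoid (the action category of G acting on X), whose objects are the cosets and whose morphisms x → g·x are given by the elements g of G. Then the category of functors from this action groupoid to finite-dimensional complex vector spaces (that is, G-equivariant vector bundles on X) is equivalent to the category of finite-dimensional complex representations of H. -/
open CategoryTheory

def stmt2Fun (G : Type) [Group G] (H : Subgroup G) :
    SingleObj H ⥤ ActionCategory G (G ⧸ H) where
  obj _ := ActionCategory.objEquiv G (G ⧸ H) ((1 : G) : G ⧸ H)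
  map {_ _} h := ⟨((show H from h) : G), by
    show ((((show H from h) : G) * 1 : G) : G ⧸ H) = ((1 : G) : G ⧸ H)
    rw [QuotientGroup.eq]
    simp⟩
  map_id _ := Subtype.ext rfl
  map_comp _ _ := Subtype.ext rfl

instance stmt2Faithful (G : Type) [Group G] (H : Subgroup G) : (stmt2Fun G H).Faithful where
  map_injective {_ _} _ _ h := Subtype.ext (congrArg Subtype.val h :)

instance stmt2Full (G : Type) [Group G] (H : Subgroup G) : (stmt2Fun G H).Full where
  map_surjective {_ _} f := by
    obtain ⟨g, hg⟩ := f
    have hg' : (((show G from g) * 1 : G) : G ⧸ H) = ((1 : G) : G ⧸ H) := hg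
    rw [QuotientGroup.eq] at hg'
    refine ⟨(⟨g, by simpa using hg'⟩ : H), Subtype.ext rfl⟩

instance stmt2EssSurj (G : Type) [Group G] (H : Subgroup G) : (stmt2Fun G H).EssSurj where
  mem_essImage y := by
    obtain ⟨g, hg⟩ := MulAction.exists_smul_eq G ((1 : G) : G ⧸ H) y.back
    let f : (stmt2Fun G H).obj (SingleObj.star H) ⟶ y := ⟨g, hg⟩
    exact ⟨SingleObj.star H, ⟨Groupoid.isoEquivHom _ _ |>.symm f⟩⟩

instance stmt2IsEquiv (G : Type) [Group G] (H : Subgroup G) : (stmt2Fun G H).IsEquivalence where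

universe w

instance stmt2UliftEssSurj : (FGModuleCat.ulift.{0, w} ℂ).EssSurj where
  mem_essImage V := by
    let e : ULift.{w} (Fin (Module.finrank ℂ V) → ℂ) ≃ₗ[ℂ] V :=
      ULift.moduleEquiv.trans (Module.finBasis ℂ V).equivFun.symm
    exact ⟨FGModuleCat.of ℂ (Fin (Module.finrank ℂ V) → ℂ), ⟨e.toFGModuleCatIso⟩⟩

instance stmt2UliftEquiv : (FGModuleCat.ulift.{0, w} ℂ).IsEquivalence where

/-- For a finite group `G` and a subgroup `H`, the category of `G`-equivariant vector
bundles on the transitive `G`-set `G/H` (i.e. functors from the action groupoid of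
`G` acting on `G ⧸ H` to finite-dimensional complex vector spaces) is equivalent to the
category of finite-dimensional complex representations of `H`. -/
theorem stmt_2 (G : Type) [Group G] [Fintype G] (H : Subgroup G) :
    Nonempty ((ActionCategory G (G ⧸ H) ⥤ FGModuleCat ℂ) ≌ FDRep ℂ ↥H) := by
  have e1 := (stmt2Fun G H).asEquivalence.symm.congrLeft (E := FGModuleCat ℂ)
  have e2 := (Action.functorCategoryEquivalence (FGModuleCat.{0} ℂ) H).symm
  have e3 := (FGModuleCat.ulift ℂ).asEquivalence.symm.congrRight (E := SingleObj H)
  exact ⟨(e1.trans e3).trans e2⟩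
end

section
/- Let p be an odd prime and let l be an odd prime with l ≠ p. Then every Sylow l-subgroup of PSL(2,p) is cyclic. -/
open Matrix
open scoped MatrixGroups

theorem aux_comm {F : Type*} [Field F] (z g : Matrix (Fin 2) (Fin 2) F)
    (hz : ¬ (z 0 1 = 0 ∧ z 1 0 = 0 ∧ z 0 0 = z 1 1)) (h : g * z = z * g) :
    ∃ x y : F, g = x • (1 : Matrix (Fin 2) (Fin 2) F) + y • z := by
  have h00 := congrFun (congrFun h 0) 0
  have h01 := congrFun (congrFun h 0) 1
  have h10 := congrFun (congrFun h 1) 0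
  simp only [Matrix.mul_apply, Fin.sum_univ_two] at h00 h01 h10
  by_cases hb : z 0 1 = 0
  · by_cases hc : z 1 0 = 0
    · have hd : z 0 0 - z 1 1 ≠ 0 := fun h => hz ⟨hb, hc, sub_eq_zero.1 h⟩
      refine ⟨g 0 0 - (g 0 0 - g 1 1) / (z 0 0 - z 1 1) * z 0 0,
        (g 0 0 - g 1 1) / (z 0 0 - z 1 1), ?_⟩
      have e1 : g 0 1 = 0 := by
        apply (mul_eq_zero.1 (_ : (z 0 0 - z 1 1) * g 0 1 = 0)).resolve_left hd
        rw [hb] at h01; linear_combination -h01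
      have e2 : g 1 0 = 0 := by
        apply (mul_eq_zero.1 (_ : (z 0 0 - z 1 1) * g 1 0 = 0)).resolve_left hd
        rw [hc] at h10; linear_combination h10
      ext i j
      fin_cases i <;> fin_cases j <;> simp [e1, e2, hb, hc]
      field_simp
      ring
    · refine ⟨g 0 0 - g 1 0 / z 1 0 * z 0 0, g 1 0 / z 1 0, ?_⟩
      ext i j
      fin_cases i <;> fin_cases j <;> simp <;> field_simp
      · linear_combination h00
      · linear_combination h10
  · refine ⟨g 0 0 - g 0 1 / z 0 1 * z 0 0, g 0 1 / z 0 1, ?_⟩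
    ext i j
    fin_cases i <;> fin_cases j <;> simp <;> field_simp
    · linear_combination -h00
    · linear_combination -h01

theorem aux_unip {F : Type*} [Field F] (p : ℕ) [Fact p.Prime] [CharP F p]
    (g : Matrix (Fin 2) (Fin 2) F) (v : Fin 2 → F) (hv : v ≠ 0) (hd : g.det = 1)
    (hg : g *ᵥ v = v) : g ^ p = 1 := by
  have h0 : (g - 1).det = 0 :=
    Matrix.exists_mulVec_eq_zero_iff.1 ⟨v, hv, by rw [Matrix.sub_mulVec, hg, one_mulVec, sub_self]⟩
  have h2 : (g - 1) ^ 2 = 0 := by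
    rw [Matrix.det_fin_two] at h0 hd
    simp at h0
    ext i j
    fin_cases i <;> fin_cases j <;> simp [pow_two, Matrix.mul_apply, Fin.sum_univ_two]
    · linear_combination (g 0 0 - 1) * hd - (g 0 0) * h0
    · linear_combination (g 0 1) * hd - (g 0 1) * h0
    · linear_combination (g 1 0) * hd - (g 1 0) * h0
    · linear_combination (g 1 1 - 1) * hd - (g 1 1) * h0
  have h3 : (g - 1) ^ p = 0 := pow_eq_zero_of_le (Fact.out : p.Prime).two_le h2
  rw [sub_pow_char_of_commute p (Commute.one_right g), one_pow, sub_eq_zero] at h3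
  exact h3

theorem aux_SL (p l : ℕ) [Fact p.Prime] [Fact l.Prime] (hlodd : Odd l) (hne : l ≠ p)
    (Q : Subgroup SL(2, ZMod p)) (hQ : IsPGroup l Q) : IsCyclic Q := by
  rcases subsingleton_or_nontrivial Q with hs | hn
  · infer_instance
  have := hQ.center_nontrivial
  obtain ⟨⟨z, hzc⟩, hz1⟩ := exists_ne (1 : Subgroup.center Q)
  have hz1 : z ≠ 1 := fun h => hz1 (Subtype.ext h)
  have hns : ¬ (z.1 0 1 = 0 ∧ z.1 1 0 = 0 ∧ z.1 0 0 = z.1 1 1) := by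
    rintro ⟨h1, h2, h3⟩
    have hd := z.1.det_coe
    rw [Matrix.det_fin_two] at hd
    have hsq : z ^ 2 = 1 := by
      ext i j
      have e1 : (z.1.1 0 1) = 0 := h1
      have e2 : (z.1.1 1 0) = 0 := h2
      have e3 : (z.1.1 0 0) = z.1.1 1 1 := h3
      rw [e1, e3] at hd
      fin_cases i <;> fin_cases j <;> simp [pow_two, Matrix.mul_apply, Fin.sum_univ_two, e1, e2, e3]
      · linear_combination hd
      · linear_combination hd
    obtain ⟨k, hk⟩ := hQ z
    have hco : Nat.Coprime (l ^ k) 2 := (Nat.coprime_two_right.2 hlodd).pow_left k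
    exact hz1 (orderOf_eq_one_iff.1 (Nat.eq_one_of_dvd_coprimes hco
      (orderOf_dvd_of_pow_eq_one hk) (orderOf_dvd_of_pow_eq_one hsq)))
  let K := AlgebraicClosure (ZMod p)
  let φ : Matrix (Fin 2) (Fin 2) (ZMod p) →+* Matrix (Fin 2) (Fin 2) K :=
    (algebraMap (ZMod p) K).mapMatrix
  have hφ : Function.Injective φ := Matrix.map_injective (algebraMap (ZMod p) K).injective
  haveI : CharP K p := charP_of_injective_algebraMap (algebraMap (ZMod p) K).injective p
  obtain ⟨c, hc⟩ := Module.End.exists_eigenvalue (Matrix.toLin' (φ z.1.1))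
  obtain ⟨v, hv⟩ := hc.exists_hasEigenvector
  have hv0 := hv.2
  have hzv : φ z.1.1 *ᵥ v = c • v := by
    rw [← Matrix.toLin'_apply]; exact hv.apply_eq_smul
  have key : ∀ g : Q, ∃ μ : K, φ g.1.1 *ᵥ v = μ • v := by
    intro g
    have hcomm : g.1.1 * z.1.1 = z.1.1 * g.1.1 := by
      have := Subgroup.mem_center_iff.1 hzc g
      exact congrArg (fun q : Q => q.1.1) this
    obtain ⟨x, y, hxy⟩ := aux_comm z.1.1 g.1.1 hns (hcomm)
    refine ⟨algebraMap _ K x + algebraMap _ K y * c, ?_⟩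
    have e : φ g.1.1 = algebraMap _ K x • (1 : Matrix (Fin 2) (Fin 2) K)
        + algebraMap _ K y • φ z.1.1 := by
      rw [hxy]
      ext i j
      by_cases hij : i = j <;> (simp [φ, hij]; try simp only [Algebra.smul_def, mul_one])
    rw [e, add_mulVec, smul_mulVec, smul_mulVec, one_mulVec, hzv, smul_smul, add_smul]
  choose μ hμ using key
  have hinj : Function.Injective (fun a : K => a • v) := smul_left_injective K hv0
  let ψ : Q →* Matrix (Fin 2) (Fin 2) K :=
    { toFun := fun g => φ g.1.1
      map_one' := φ.map_one
      map_mul' := fun g h => φ.map_mul g.1.1 h.1.1 }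
  have hψ : ∀ g, ψ g *ᵥ v = μ g • v := hμ
  have hψi : Function.Injective ψ := fun a b h => Subtype.ext (Subtype.ext (hφ h))
  have hψd : ∀ g, (ψ g).det = 1 := by
    intro g
    change (φ g.1.1).det = 1
    rw [← RingHom.map_det]
    have : g.1.1.det = 1 := g.1.2
    rw [this, map_one]
  clear_value ψ
  let χ : Q →* K :=
    { toFun := μ
      map_one' := hinj (by
        change μ 1 • v = (1 : K) • v
        rw [← hψ, map_one, one_mulVec, one_smul])
      map_mul' := fun g h => hinj (by
        change μ (g * h) • v = (μ g * μ h) • v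
        rw [← hψ, map_mul, ← mulVec_mulVec, hψ h, mulVec_smul, hψ g, smul_smul, mul_comm]) }
  refine isCyclic_of_injective_ringHom χ ((injective_iff_map_eq_one χ).2 ?_)
  intro g hg
  have hg' : μ g = 1 := hg
  have hgp : g ^ p = 1 := hψi (by
    rw [map_pow, map_one]
    exact aux_unip p _ v hv0 (hψd g) (by rw [hψ, hg', one_smul]))
  obtain ⟨k, hk⟩ := hQ g
  have hco : Nat.Coprime (l ^ k) p :=
    ((Nat.coprime_primes Fact.out Fact.out).2 hne).pow_left k
  exact orderOf_eq_one_iff.1 (Nat.eq_one_of_dvd_coprimes hco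
    (orderOf_dvd_of_pow_eq_one hk) (orderOf_dvd_of_pow_eq_one hgp))

theorem stmt_5 (p l : ℕ) (hp : p.Prime) (hpodd : Odd p)
    (hl : l.Prime) (hlodd : Odd l) (hne : l ≠ p)
    (P : Sylow l PSL(2, ZMod p)) : IsCyclic P := by
  haveI : Fact p.Prime := ⟨hp⟩
  haveI : Fact l.Prime := ⟨hl⟩
  have hs : Function.Surjective (QuotientGroup.mk' (Subgroup.center SL(2, ZMod p))) :=
    QuotientGroup.mk'_surjective _
  obtain ⟨Q, rfl⟩ := Sylow.mapSurjective_surjective hs l P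
  haveI := aux_SL p l hlodd hne Q.1 Q.2
  exact isCyclic_of_surjective _ ((QuotientGroup.mk' (Subgroup.center SL(2, ZMod p))).subgroupMap_surjective Q.1)
end

section
/- Let p be an odd prime and let a ∈ ZMod p satisfy a² ≠ 4. Then there exist x, y ∈ ZMod p such that x² + a·x·y + y² = −1. -/
/-- For an odd prime `p` and `a ∈ 𝔽_p` with `a² ≠ 4`, the equation
`x² + a·x·y + y² = −1` has a solution in `𝔽_p`. -/
theorem stmt_7 (p : ℕ) (hp : p.Prime) (hodd : Odd p) (a : ZMod p) (ha : a ^ 2 ≠ 4) :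
    ∃ x y : ZMod p, x ^ 2 + a * x * y + y ^ 2 = -1 := by
  haveI : Fact p.Prime := ⟨hp⟩
  have h2 : (2 : ZMod p) ≠ 0 := by
    apply Ring.two_ne_zero
    rw [ZMod.ringChar_zmod_n]
    rintro rfl
    exact absurd hodd (by decide)
  have hc : (1 - (a / 2) ^ 2 : ZMod p) ≠ 0 := by
    intro h
    apply ha
    field_simp at h
    linear_combination -h
  obtain ⟨u, y, h⟩ := FiniteField.exists_root_sum_quadratic
    (f := (Polynomial.X ^ 2 : Polynomial (ZMod p)))
    (g := Polynomial.C (1 - (a / 2) ^ 2) * Polynomial.X ^ 2 + Polynomial.C 0 * Polynomial.X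
      + Polynomial.C 1)
    (Polynomial.degree_X_pow 2) (Polynomial.degree_quadratic hc)
    (by rw [ZMod.card]; exact Nat.odd_iff.mp hodd)
  simp only [Polynomial.eval_add, Polynomial.eval_mul, Polynomial.eval_pow, Polynomial.eval_X,
    Polynomial.eval_C] at h
  refine ⟨u - a / 2 * y, y, ?_⟩
  have h3 : a = 2 * (a / 2) := by field_simp
  generalize a / 2 = b at *
  subst h3
  linear_combination h
end

section
/- Let p be an odd prime and let a ∈ ZMod p satisfy a² ≠ 4. Let A ∈ SL(2,p) be the companion matrix with rows (0,−1) and (1,a). Then there exists S ∈ SL(2,p) such that S·A·S⁻¹ = A⁻¹. -/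
open Matrix

open Polynomial in
theorem aux_form (p : ℕ) [Fact p.Prime] (hodd : Odd p) (c : ZMod p) (hc : c ≠ 0) :
    ∃ u v : ZMod p, u ^ 2 + c * v ^ 2 = -1 := by
  have h1 : (X ^ 2 : (ZMod p)[X]).degree = 2 := by simp
  have h2 : (C c * X ^ 2 + C 0 * X + C 1 : (ZMod p)[X]).degree = 2 := degree_quadratic hc
  have hcard : Fintype.card (ZMod p) % 2 = 1 := by
    rw [ZMod.card]; exact Nat.odd_iff.mp hodd
  obtain ⟨u, v, h⟩ := FiniteField.exists_root_sum_quadratic h1 h2 hcard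
  refine ⟨u, v, ?_⟩
  simp at h
  linear_combination h

theorem aux_conj {R : Type*} [CommRing R] (a x z : R)
    (A S : SpecialLinearGroup (Fin 2) R)
    (hA : (A : Matrix (Fin 2) (Fin 2) R) = !![0, -1; 1, a])
    (hS : (S : Matrix (Fin 2) (Fin 2) R) = !![x, a * x + z; z, -x]) :
    S * A * S⁻¹ = A⁻¹ := by
  refine mul_inv_eq_iff_eq_mul.mpr ?_
  apply Matrix.SpecialLinearGroup.ext
  rw [Matrix.SpecialLinearGroup.coe_mul, Matrix.SpecialLinearGroup.coe_mul, Matrix.SpecialLinearGroup.coe_inv, hA, hS,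
    Matrix.adjugate_fin_two_of]
  simp only [Matrix.mul_fin_two]
  intro i j
  fin_cases i <;> fin_cases j <;> simp <;> ring

/-- For an odd prime `p` and `a ∈ 𝔽_p` with `a² ≠ 4`, the companion matrix
`A = [[0,−1],[1,a]] ∈ SL(2,p)` is conjugate to its inverse inside `SL(2,p)`. -/
theorem stmt_8 (p : ℕ) (hp : p.Prime) (hodd : Odd p) (a : ZMod p) (ha : a ^ 2 ≠ 4)
    (A : SpecialLinearGroup (Fin 2) (ZMod p))
    (hA : (A : Matrix (Fin 2) (Fin 2) (ZMod p)) = !![0, -1; 1, a]) :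
    ∃ S : SpecialLinearGroup (Fin 2) (ZMod p), S * A * S⁻¹ = A⁻¹ := by
  have : Fact p.Prime := ⟨hp⟩
  obtain ⟨u, v, h⟩ := aux_form p hodd (4 - a ^ 2) (sub_ne_zero.mpr ha.symm)
  have hdet : (!![u - a * v, a * (u - a * v) + 2 * v; 2 * v, -(u - a * v)] :
      Matrix (Fin 2) (Fin 2) (ZMod p)).det = 1 := by
    rw [Matrix.det_fin_two_of]
    linear_combination -h
  exact ⟨⟨_, hdet⟩, aux_conj a (u - a * v) (2 * v) A _ hA rfl⟩
end

section
/- Let p be a prime with p ≡ 3 (mod 8) or p ≡ 5 (mod 8). Then every Sylow 2-subgroup of PSL(2,p) is a Klein four-group, i.e., isomorphic as a group to C₂ × C₂. -/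
open Matrix
open scoped MatrixGroups

lemma aux_center {F : Type*} [Field F] (A : SL(2, F)) :
    A ∈ Subgroup.center SL(2, F) ↔ A.1 0 1 = 0 ∧ A.1 1 0 = 0 ∧ A.1 0 0 = A.1 1 1 := by
  rw [Matrix.SpecialLinearGroup.mem_center_iff]
  constructor
  · rintro ⟨r, -, hr⟩
    rw [← hr]
    simp
  · rintro ⟨h1, h2, h3⟩
    refine ⟨A.1 0 0, ?_, ?_⟩
    · have := A.2
      rw [Matrix.det_fin_two, h1, ← h3] at this
      simp only [Fintype.card_fin]
      linear_combination this
    · ext i j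
      fin_cases i <;> fin_cases j <;> simp [h1, h2, h3]

lemma aux_sq {F : Type*} [Field F] (h2 : ¬ IsSquare (2 : F)) (A : SL(2, F))
    (h : A ^ 4 ∈ Subgroup.center SL(2, F)) : A ^ 2 ∈ Subgroup.center SL(2, F) := by
  rw [aux_center] at h ⊢
  have hd := A.2
  rw [Matrix.det_fin_two] at hd
  have e4 : (A ^ 4).1 = A.1 * A.1 * (A.1 * A.1) := by
    rw [show A ^ 4 = A * A * (A * A) by simp only [pow_succ, pow_zero, one_mul, mul_assoc]]; rfl
  have e2 : (A ^ 2).1 = A.1 * A.1 := by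
    rw [pow_two]; rfl
  rw [e4] at h
  rw [e2]
  generalize A.1 = M at *
  simp only [Matrix.mul_apply, Fin.sum_univ_two] at h ⊢
  generalize M 0 0 = a at *
  generalize M 0 1 = b at *
  generalize M 1 0 = c at *
  generalize M 1 1 = d at *
  obtain ⟨x1, x2, x3⟩ := h
  have hu : (a + d) * (a + d) - 2 ≠ 0 := by
    intro hh
    exact h2 ⟨a + d, by linear_combination -hh⟩
  refine ⟨mul_left_cancel₀ hu ?_, mul_left_cancel₀ hu ?_, mul_left_cancel₀ hu ?_⟩
  · linear_combination x1 + 2 * (a * b + b * d) * hd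
  · linear_combination x2 + 2 * (c * a + d * c) * hd
  · linear_combination x3 + 2 * (a * a - d * d) * hd

lemma aux_card_SL (p : ℕ) [Fact p.Prime] :
    Nat.card SL(2, ZMod p) * (p - 1) = (p ^ 2 - 1) * (p ^ 2 - p) := by
  have h := Matrix.card_GL_field (𝔽 := ZMod p) 2
  simp only [Fin.prod_univ_two, ZMod.card] at h
  have hk := Subgroup.card_mul_index (Matrix.GeneralLinearGroup.det (n := Fin 2) (R := ZMod p)).ker
  rw [Subgroup.index_ker, MonoidHom.range_eq_top.mpr Matrix.GeneralLinearGroup.det_surjective,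
    Subgroup.card_top, h, Nat.card_eq_fintype_card (α := (ZMod p)ˣ), ZMod.card_units] at hk
  have e : SL(2, ZMod p) ≃ (Matrix.GeneralLinearGroup.det (n := Fin 2) (R := ZMod p)).ker :=
    { toFun := fun A => ⟨Matrix.SpecialLinearGroup.toGL A, by
        rw [MonoidHom.mem_ker]; ext; simp⟩
      invFun := fun A => ⟨A.1.1, by
        have := congrArg Units.val (MonoidHom.mem_ker.mp A.2)
        simpa using this⟩
      left_inv := fun A => rfl
      right_inv := fun A => by ext; rfl }
  rw [Nat.card_congr e, hk]
  simp

lemma aux_card_center (p : ℕ) [Fact p.Prime] (h2 : p ≠ 2) :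
    Nat.card (Subgroup.center SL(2, ZMod p)) = 2 := by
  rw [Nat.card_congr (Matrix.SpecialLinearGroup.center_equiv_rootsOfUnity' (0 : Fin 2)).toEquiv]
  have : IsPrimitiveRoot (-1 : ZMod p) (Fintype.card (Fin 2)) := IsPrimitiveRoot.neg_one p h2
  rw [this.card_rootsOfUnity]
  simp

lemma aux_card (p : ℕ) [Fact p.Prime] (hmod : p % 8 = 3 ∨ p % 8 = 5) :
    ∃ k, Nat.card PSL(2, ZMod p) = 4 * k ∧ ¬ 2 ∣ k := by
  have h1 := aux_card_SL p
  have h2 := aux_card_center p (by rintro rfl; omega)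
  have h3 := Subgroup.card_eq_card_quotient_mul_card_subgroup (Subgroup.center SL(2, ZMod p))
  rw [h2] at h3
  rw [h3] at h1
  change Nat.card PSL(2, ZMod p) * 2 * _ = _ at h1
  generalize Nat.card PSL(2, ZMod p) = N at *
  have h4 : N * 2 = (p ^ 2 - 1) * p := by
    have hp1 : 0 < p - 1 := by omega
    apply Nat.eq_of_mul_eq_mul_right hp1
    rw [h1, mul_assoc, Nat.mul_sub p p 1, mul_one, pow_two]
  have hodd : ∀ m, ¬ 2 ∣ m * 2 + 1 := by omega
  obtain ⟨q, hq⟩ : ∃ q, p = 8 * q + 3 ∨ p = 8 * q + 5 := ⟨p / 8, by omega⟩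
  rcases hq with rfl | rfl
  · have e : (8 * q + 3) ^ 2 - 1 = 8 * ((4 * q + 1) * (2 * q + 1)) := by
      rw [Nat.sub_eq_iff_eq_add (Nat.one_le_pow _ _ (by omega))]; ring
    rw [e] at h4
    refine ⟨(4 * q + 1) * (2 * q + 1) * (8 * q + 3), by linarith, ?_⟩
    rw [Nat.prime_two.dvd_mul, Nat.prime_two.dvd_mul]; omega
  · have e : (8 * q + 5) ^ 2 - 1 = 8 * ((2 * q + 1) * (4 * q + 3)) := by
      rw [Nat.sub_eq_iff_eq_add (Nat.one_le_pow _ _ (by omega))]; ring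
    rw [e] at h4
    refine ⟨(2 * q + 1) * (4 * q + 3) * (8 * q + 5), by linarith, ?_⟩
    rw [Nat.prime_two.dvd_mul, Nat.prime_two.dvd_mul]; omega

/-- For a prime `p ≡ 3, 5 (mod 8)`, every Sylow `2`-subgroup of `PSL(2,p)` is a
Klein four-group, i.e. isomorphic to `C₂ × C₂`. -/
theorem stmt_10 (p : ℕ) (hp : p.Prime) (hmod : p % 8 = 3 ∨ p % 8 = 5)
    (P : Sylow 2 PSL(2, ZMod p)) :
    Nonempty (P ≃* (Multiplicative (ZMod 2) × Multiplicative (ZMod 2))) := by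
  have : Fact p.Prime := ⟨hp⟩
  have hns : ¬ IsSquare (2 : ZMod p) := by
    rw [ZMod.exists_sq_eq_two_iff (by rintro rfl; omega)]; omega
  have hc : Nat.card P = 4 := by
    obtain ⟨k, hk, hk2⟩ := aux_card p hmod
    have hk0 : k ≠ 0 := by rintro rfl; simp at hk2
    have : Finite PSL(2, ZMod p) := Nat.finite_of_card_ne_zero (by omega)
    rw [P.card_eq_multiplicity, hk, show 4 * k = 2 ^ 2 * k by ring,
      Nat.factorization_mul (by norm_num) hk0, Nat.prime_two.factorization_pow]
    simp [Nat.factorization_eq_zero_of_not_dvd hk2]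
  have hsq : ∀ g : P, g ^ 2 = 1 := by
    intro g
    have h4 : g ^ 4 = 1 := by rw [← hc]; exact pow_card_eq_one'
    obtain ⟨A, hA⟩ := QuotientGroup.mk_surjective g.1
    have h4' : g.1 ^ 4 = 1 := by exact_mod_cast congrArg Subtype.val h4
    apply Subtype.ext
    change g.1 ^ 2 = 1
    rw [← hA] at h4' ⊢
    exact (QuotientGroup.eq_one_iff (A ^ 2)).mpr
      (aux_sq hns A ((QuotientGroup.eq_one_iff (A ^ 4)).mp h4'))
  have : Nontrivial P := by
    have : Finite P := Nat.finite_of_card_ne_zero (by omega)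
    exact Finite.one_lt_card_iff_nontrivial.mp (by omega)
  have : IsKleinFour P := ⟨hc, by
    refine ((Nat.dvd_prime Nat.prime_two).mp
      (Monoid.exponent_dvd_of_forall_pow_eq_one hsq)).resolve_left ?_
    rw [Monoid.exp_eq_one_iff]
    exact not_subsingleton P⟩
  obtain ⟨e⟩ : Nonempty (P ≃* Multiplicative (ZMod 2 × ZMod 2)) := IsKleinFour.nonempty_mulEquiv
  exact ⟨e.trans (MulEquiv.prodMultiplicative (ZMod 2) (ZMod 2))⟩
end

section
/- Let p be a prime and let R = ℤ[Y]/((1+Y)^p − 1). Then the element p·Y of R belongs to the ideal of R generated by Y^p. -/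
open Polynomial

theorem aux_12 {R : Type*} [CommRing R] (p : ℕ) (hp : p.Prime) (y : R)
    (h : (1 + y) ^ p = 1) : y ^ p ∣ (p : R) * y := by
  have h1 := add_pow_prime_eq hp y 1
  rw [add_comm y 1, h] at h1
  obtain ⟨g, hg⟩ : y ∣ (∑ k ∈ Finset.Ioo 0 p, y ^ (k - 1) * 1 ^ (p - k - 1) *
      ((p.choose k / p : ℕ) : R)) - 1 := by
    rw [← Finset.add_sum_erase _ _ (Finset.mem_Ioo.2 ⟨Nat.one_pos, hp.one_lt⟩)]
    simp only [Nat.choose_one_right, Nat.div_self hp.pos, Nat.sub_self, pow_zero, one_pow,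
      Nat.cast_one, mul_one, add_sub_cancel_left]
    refine Finset.dvd_sum fun k hk => ?_
    simp only [Finset.mem_erase, Finset.mem_Ioo] at hk
    exact Dvd.dvd.mul_right (dvd_pow_self y (by omega)) _
  rw [sub_eq_iff_eq_add] at hg
  rw [hg, one_pow] at h1
  have h2 : (p : R) * y = -y ^ p + (p * y) * (y * -g) := by linear_combination -h1
  have h3 : ∀ n : ℕ, y ^ p ∣ (p : R) * y - (p * y) * (y * -g) ^ n := by
    intro n
    induction n with
    | zero => simp
    | succ n ih =>
      have : (p : R) * y - (p * y) * (y * -g) ^ (n + 1) =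
          ((p : R) * y - (p * y) * (y * -g) ^ n) + y ^ p * (-(y * -g) ^ n) := by
        linear_combination (y * -g) ^ n * h2
      rw [this]
      exact dvd_add ih (dvd_mul_right _ _)
  have h4 := h3 p
  rw [dvd_sub_left] at h4
  · exact h4
  · rw [mul_pow]
    exact Dvd.intro_left (p * y * (-g) ^ p) (by ring)

/-- In `R = ℤ[Y]/((1+Y)^p − 1)` (the representation ring of the cyclic group of
order `p`), the element `p·Y` lies in the ideal generated by `Y^p`. -/
theorem stmt_12 (p : ℕ) (hp : p.Prime) (I : Ideal (Polynomial ℤ))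
    (hI : I = Ideal.span {((1 + X) ^ p - 1 : Polynomial ℤ)}) :
    (p : Polynomial ℤ ⧸ I) * Ideal.Quotient.mk I X ∈
      Ideal.span {(Ideal.Quotient.mk I X) ^ p} := by
  rw [Ideal.mem_span_singleton]
  apply aux_12 p hp
  have : Ideal.Quotient.mk I ((1 + X) ^ p - 1) = 0 := by
    rw [Ideal.Quotient.eq_zero_iff_mem, hI]
    exact Ideal.mem_span_singleton_self _
  rw [map_sub, map_pow, map_add, map_one, sub_eq_zero] at this
  exact this
end

section
/- Let R = ℤ[t₁,t₂]/(2t₁, 2t₂, t₁²t₂ − t₁t₂²), and let σ be the ring endomorphism of R determined by σ(t₁) = t₂ and σ(t₂) = t₁ + t₂ (which is well defined on R). Then the element z := t₁³ + t₂³ + t₁²t₂ satisfies σ(z) = z, but z does not belong to the subring of R generated by t₁² + t₁t₂ + t₂². -/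
open MvPolynomial

/-- In `R = ℤ[t₁,t₂]/(2t₁, 2t₂, t₁²t₂ − t₁t₂²)` (the graded character ring of
`C₂ × C₂`), for the ring endomorphism `σ` determined by `σ(t₁) = t₂`,
`σ(t₂) = t₁ + t₂`, the element `z = t₁³ + t₂³ + t₁²t₂` is fixed by `σ` but does not
lie in the subring generated by `t₁² + t₁t₂ + t₂²`. -/
theorem stmt_13 (I : Ideal (MvPolynomial (Fin 2) ℤ))
    (hI : I = Ideal.span {2 * X 0, 2 * X 1, (X 0) ^ 2 * X 1 - X 0 * (X 1) ^ 2})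
    (t₁ t₂ : MvPolynomial (Fin 2) ℤ ⧸ I)
    (ht₁ : t₁ = Ideal.Quotient.mk I (X 0)) (ht₂ : t₂ = Ideal.Quotient.mk I (X 1))
    (σ : (MvPolynomial (Fin 2) ℤ ⧸ I) →+* (MvPolynomial (Fin 2) ℤ ⧸ I))
    (hσ₁ : σ t₁ = t₂) (hσ₂ : σ t₂ = t₁ + t₂)
    (z : MvPolynomial (Fin 2) ℤ ⧸ I) (hz : z = t₁ ^ 3 + t₂ ^ 3 + t₁ ^ 2 * t₂) :
    σ z = z ∧ z ∉ Subring.closure {t₁ ^ 2 + t₁ * t₂ + t₂ ^ 2} := by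
  have h2a : 2 * t₁ = 0 := by
    rw [ht₁, ← map_ofNat (Ideal.Quotient.mk I) 2, ← map_mul, Ideal.Quotient.eq_zero_iff_mem, hI]
    exact Ideal.subset_span (by simp)
  have h2b : 2 * t₂ = 0 := by
    rw [ht₂, ← map_ofNat (Ideal.Quotient.mk I) 2, ← map_mul, Ideal.Quotient.eq_zero_iff_mem, hI]
    exact Ideal.subset_span (by simp)
  refine ⟨?_, ?_⟩
  · rw [hz]
    simp only [map_add, map_mul, map_pow, hσ₁, hσ₂]
    linear_combination (t₂ ^ 2 + t₁ ^ 2 + 2 * t₁ * t₂) * h2b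
  · intro hmem
    let f : MvPolynomial (Fin 2) ℤ →+* Polynomial (ZMod 2) :=
      eval₂Hom (Int.castRingHom _) ![Polynomial.X, 0]
    have f0 : f (X 0) = Polynomial.X := by simp [f]
    have f1 : f (X 1) = 0 := by simp [f]
    have two : (2 : Polynomial (ZMod 2)) = 0 := CharTwo.two_eq_zero
    have f2 : f 2 = 0 := by rw [map_ofNat]; exact two
    have hf : ∀ a ∈ I, f a = 0 := by
      have : I ≤ RingHom.ker f := by
        rw [hI, Ideal.span_le]
        rintro x (rfl | rfl | rfl) <;>
          simp [RingHom.mem_ker, f0, f1, f2]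
      exact fun a ha => this ha
    let g := Ideal.Quotient.lift I f hf
    have g1 : g t₁ = Polynomial.X := by rw [ht₁]; exact f0
    have g2 : g t₂ = 0 := by rw [ht₂]; exact f1
    have key : ∀ x ∈ Subring.closure {t₁ ^ 2 + t₁ * t₂ + t₂ ^ 2},
        Polynomial.derivative (g x) = 0 := by
      intro x hx
      induction hx using Subring.closure_induction with
      | mem x hx =>
        rw [Set.mem_singleton_iff.1 hx]
        simp only [map_add, map_mul, map_pow, g1, g2]
        simp
        exact CharTwo.add_self_eq_zero _
      | zero => simp
      | one => simp
      | add x y _ _ hx hy => simp [hx, hy]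
      | neg x _ hx => simp [hx]
      | mul x y _ _ hx hy => simp [hx, hy]
    have e : (Polynomial.X ^ 3 + 0 ^ 3 + Polynomial.X ^ 2 * 0 : Polynomial (ZMod 2))
        = Polynomial.X ^ 3 := by ring
    have h3 : (((2 : ℕ) : ZMod 2) + 1) ≠ 0 := by decide
    apply h3
    have h4 := key z hmem
    rw [hz] at h4
    simp only [map_add g, map_mul g, map_pow g, g1, g2] at h4
    rw [e] at h4
    have h5 := congrArg (fun p => Polynomial.coeff p 2) h4
    simp only [Polynomial.coeff_derivative, Polynomial.coeff_X_pow, Polynomial.coeff_zero] at h5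
    simpa using h5
end

section
/- Let R = ℤ[t₁,t₂]/(2t₁, 2t₂, t₁²t₂ − t₁t₂²), and let σ be the ring endomorphism of R determined by σ(t₁) = t₂ and σ(t₂) = t₁ + t₂. Then σ is a ring automorphism of R of order 3, the fixed subring {r ∈ R | σ(r) = r} is the subring of R generated by w := t₁² + t₁t₂ + t₂² and v := t₁³ + t₁²t₂ + t₂³, and this fixed subring is isomorphic to ℤ[z,t]/(2z, 2t, z³ − t²) via z ↦ w and t ↦ v. -/
open MvPolynomial

namespace Aux14

abbrev P := MvPolynomial (Fin 2) ℤ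
abbrev F := Polynomial (ZMod 2)

noncomputable def evl {A : Type*} [CommRing A] (a : A) : Polynomial ℤ →+* A :=
  Polynomial.eval₂RingHom (Int.castRingHom A) a

lemma evl_X {A : Type*} [CommRing A] (a : A) : evl a Polynomial.X = a := by simp [evl]

lemma evl_C {A : Type*} [CommRing A] (a : A) (n : ℤ) : evl a (Polynomial.C n) = n := by
  simp [evl]

lemma even_kill {A : Type*} [CommRing A] (a c : A) (hc : 2 * c = 0) (p : Polynomial ℤ)
    (hp : p.map (Int.castRingHom (ZMod 2)) = 0) : c * evl a p = 0 := by
  have h : Polynomial.C (2 : ℤ) ∣ p := by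
    rw [Polynomial.C_dvd_iff_dvd_coeff]
    intro i
    have := congrArg (fun q => Polynomial.coeff q i) hp
    simp only [Polynomial.coeff_map, Polynomial.coeff_zero, eq_intCast] at this
    exact (ZMod.intCast_zmod_eq_zero_iff_dvd _ 2).1 this
  obtain ⟨q, rfl⟩ := h
  rw [map_mul, evl_C]
  push_cast
  linear_combination (evl a q) * hc

lemma swap {A : Type*} [CommRing A] (a b : A) (h : a ^ 2 * b = a * b ^ 2) (q : Polynomial ℤ) :
    a * b * evl b q = a * b * evl a q := by
  have : (b - a) ∣ evl b q - evl a q := by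
    simpa [evl, Polynomial.eval₂_eq_eval_map] using
      Polynomial.sub_dvd_eval_sub b a (q.map (Int.castRingHom A))
  obtain ⟨k, hk⟩ := this
  linear_combination a * b * hk - k * h

lemma nfI {A : Type*} [CommRing A] (f : P →+* A) (a b : A) (ha : f (X 0) = a) (hb : f (X 1) = b)
    (h : a ^ 2 * b = a * b ^ 2) (r : P) :
    ∃ (n : ℤ) (p q u : Polynomial ℤ), f r = n + a * evl a p
      + b * evl b q + a * b * evl a u := by
  induction r using MvPolynomial.induction_on with
  | C n => exact ⟨n, 0, 0, 0, by simp⟩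
  | add x y hx hy =>
    obtain ⟨n, p, q, u, hx⟩ := hx
    obtain ⟨n', p', q', u', hy⟩ := hy
    refine ⟨n + n', p + p', q + q', u + u', ?_⟩
    rw [map_add, hx, hy]
    simp only [map_add, Int.cast_add]
    ring
  | mul_X x i hx =>
    obtain ⟨n, p, q, u, hx⟩ := hx
    fin_cases i
    · refine ⟨0, Polynomial.C n + Polynomial.X * p, 0, q + Polynomial.X * u, ?_⟩
      simp only [Fin.zero_eta, map_mul, hx, ha, map_add, evl_C, evl_X,
        map_zero, Int.cast_zero]
      have := swap a b h q
      linear_combination this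
    · refine ⟨0, 0, Polynomial.C n + Polynomial.X * q, p + Polynomial.X * u, ?_⟩
      simp only [Fin.mk_one, map_mul, hx, hb, map_add, evl_C, evl_X,
        map_zero, Int.cast_zero]
      linear_combination (-evl a u) * h

lemma nfJ {A : Type*} [CommRing A] (f : P →+* A) (a b : A) (ha : f (X 0) = a) (hb : f (X 1) = b)
    (h : a ^ 3 = b ^ 2) (r : P) :
    ∃ (n : ℤ) (p q : Polynomial ℤ), f r = n + a * evl a p
      + b * evl a q := by
  induction r using MvPolynomial.induction_on with
  | C n => exact ⟨n, 0, 0, by simp⟩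
  | add x y hx hy =>
    obtain ⟨n, p, q, hx⟩ := hx
    obtain ⟨n', p', q', hy⟩ := hy
    refine ⟨n + n', p + p', q + q', ?_⟩
    rw [map_add, hx, hy]
    simp only [map_add, Int.cast_add]
    ring
  | mul_X x i hx =>
    obtain ⟨n, p, q, hx⟩ := hx
    fin_cases i
    · refine ⟨0, Polynomial.C n + Polynomial.X * p, Polynomial.X * q, ?_⟩
      simp only [Fin.zero_eta, map_mul, hx, ha, map_add, evl_C, evl_X,
        Int.cast_zero]
      ring
    · refine ⟨0, Polynomial.X ^ 2 * q, Polynomial.C n + Polynomial.X * p, ?_⟩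
      simp only [Fin.mk_one, map_mul, map_pow, hx, hb, map_add, evl_C,
        evl_X, Int.cast_zero]
      linear_combination (-evl a q) * h

lemma push {A : Type*} [CommRing A] (φ : A →+* F) (a : A) (p : Polynomial ℤ)
    (ha : φ a = Polynomial.X) :
    φ (evl a p) = p.map (Int.castRingHom (ZMod 2)) := by
  induction p using Polynomial.induction_on' with
  | add p q hp hq => simp [hp, hq]
  | monomial n c => simp [← Polynomial.C_mul_X_pow_eq_monomial, ha, evl_X, -eq_intCast, evl_C]

lemma push2 {A : Type*} [CommRing A] (φ : A →+* F) (a : A) (p : Polynomial ℤ)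
    (ha : φ a = Polynomial.X ^ 2) :
    φ (evl a p) =
      Polynomial.expand (ZMod 2) 2 (p.map (Int.castRingHom (ZMod 2))) := by
  induction p using Polynomial.induction_on' with
  | add p q hp hq => simp [hp, hq]
  | monomial n c => simp [← Polynomial.C_mul_X_pow_eq_monomial, ha, evl_X, -eq_intCast, evl_C]

lemma two_F (x : F) : 2 * x = 0 := CharTwo.two_eq_zero (R := F) ▸ zero_mul x

lemma oddeven (p q : F) (h : Polynomial.expand (ZMod 2) 2 p
    + Polynomial.X * Polynomial.expand (ZMod 2) 2 q = 0) : p = 0 ∧ q = 0 := by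
  constructor
  · ext n
    have := congrArg (fun q => Polynomial.coeff q (n * 2)) h
    simp only [Polynomial.coeff_add, Polynomial.coeff_expand_mul two_pos,
      Polynomial.coeff_zero] at this
    rcases n with _ | n
    · simpa using this
    · rw [show (n + 1) * 2 = (n * 2 + 1) + 1 by ring, Polynomial.coeff_X_mul,
        Polynomial.coeff_expand two_pos, if_neg (by omega)] at this
      simpa using this
  · ext n
    have := congrArg (fun q => Polynomial.coeff q (n * 2 + 1)) h
    simp only [Polynomial.coeff_add, Polynomial.coeff_X_mul,
      Polynomial.coeff_expand_mul two_pos, Polynomial.coeff_zero] at this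
    rw [Polynomial.coeff_expand two_pos, if_neg (by omega)] at this
    simpa using this

lemma liftI {B : Type*} [CommRing B] (I : Ideal P)
    (hI : I = Ideal.span {2 * X 0, 2 * X 1, (X 0) ^ 2 * X 1 - X 0 * (X 1) ^ 2})
    (a b : B) (ha : 2 * a = 0) (hb : 2 * b = 0) (h : a ^ 2 * b = a * b ^ 2) :
    ∃ φ : P ⧸ I →+* B, φ (Ideal.Quotient.mk I (X 0)) = a ∧ φ (Ideal.Quotient.mk I (X 1)) = b := by
  let f : P →+* B := MvPolynomial.eval₂Hom (Int.castRingHom B) ![a, b]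
  have hf : ∀ x ∈ I, f x = 0 := by
    have : I ≤ RingHom.ker f := by
      rw [hI, Ideal.span_le]
      rintro x (rfl | rfl | rfl) <;> simp [f, RingHom.mem_ker, ha, hb, h]
    exact fun x hx => this hx
  exact ⟨Ideal.Quotient.lift I f hf, by simp [f], by simp [f]⟩

lemma liftJ {B : Type*} [CommRing B] (J : Ideal P)
    (hJ : J = Ideal.span {2 * X 0, 2 * X 1, (X 0) ^ 3 - (X 1) ^ 2})
    (a b : B) (ha : 2 * a = 0) (hb : 2 * b = 0) (h : a ^ 3 = b ^ 2) :
    ∃ φ : P ⧸ J →+* B, φ (Ideal.Quotient.mk J (X 0)) = a ∧ φ (Ideal.Quotient.mk J (X 1)) = b := by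
  let f : P →+* B := MvPolynomial.eval₂Hom (Int.castRingHom B) ![a, b]
  have hf : ∀ x ∈ J, f x = 0 := by
    have : J ≤ RingHom.ker f := by
      rw [hJ, Ideal.span_le]
      rintro x (rfl | rfl | rfl) <;> simp [f, RingHom.mem_ker, ha, hb, h]
    exact fun x hx => this hx
  exact ⟨Ideal.Quotient.lift J f hf, by simp [f], by simp [f]⟩

lemma ext2 {B : Type*} [CommRing B] (I : Ideal P) (f g : P ⧸ I →+* B)
    (h0 : f (Ideal.Quotient.mk I (X 0)) = g (Ideal.Quotient.mk I (X 0)))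
    (h1 : f (Ideal.Quotient.mk I (X 1)) = g (Ideal.Quotient.mk I (X 1))) : f = g := by
  apply Ideal.Quotient.ringHom_ext
  apply MvPolynomial.ringHom_ext
  · intro n; simp
  · intro i
    fin_cases i
    · exact h0
    · exact h1

end Aux14

set_option maxHeartbeats 4000000 in
open Aux14 in
/-- In `R = ℤ[t₁,t₂]/(2t₁, 2t₂, t₁²t₂ − t₁t₂²)`, the ring endomorphism `σ` determined
by `σ(t₁) = t₂`, `σ(t₂) = t₁ + t₂` is an automorphism of order `3`, its fixed subring
is the subring generated by `w = t₁² + t₁t₂ + t₂²` and `v = t₁³ + t₁²t₂ + t₂³`, and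
this fixed subring is isomorphic to `ℤ[z,t]/(2z, 2t, z³ − t²)` via `z ↦ w`, `t ↦ v`. -/
theorem stmt_14 (I : Ideal (MvPolynomial (Fin 2) ℤ))
    (hI : I = Ideal.span {2 * X 0, 2 * X 1, (X 0) ^ 2 * X 1 - X 0 * (X 1) ^ 2})
    (t₁ t₂ : MvPolynomial (Fin 2) ℤ ⧸ I)
    (ht₁ : t₁ = Ideal.Quotient.mk I (X 0)) (ht₂ : t₂ = Ideal.Quotient.mk I (X 1))
    (σ : (MvPolynomial (Fin 2) ℤ ⧸ I) →+* (MvPolynomial (Fin 2) ℤ ⧸ I))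
    (hσ₁ : σ t₁ = t₂) (hσ₂ : σ t₂ = t₁ + t₂)
    (w v : MvPolynomial (Fin 2) ℤ ⧸ I)
    (hw : w = t₁ ^ 2 + t₁ * t₂ + t₂ ^ 2) (hv : v = t₁ ^ 3 + t₁ ^ 2 * t₂ + t₂ ^ 3)
    (J : Ideal (MvPolynomial (Fin 2) ℤ))
    (hJ : J = Ideal.span {2 * X 0, 2 * X 1, (X 0) ^ 3 - (X 1) ^ 2}) :
    (∃ σ' : RingAut (MvPolynomial (Fin 2) ℤ ⧸ I),
        (∀ r, σ' r = σ r) ∧ orderOf σ' = 3) ∧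
    RingHom.eqLocus σ (RingHom.id _) = Subring.closure {w, v} ∧
    ∃ e : (MvPolynomial (Fin 2) ℤ ⧸ J) ≃+* Subring.closure {w, v},
      (e (Ideal.Quotient.mk J (X 0)) : MvPolynomial (Fin 2) ℤ ⧸ I) = w ∧
      (e (Ideal.Quotient.mk J (X 1)) : MvPolynomial (Fin 2) ℤ ⧸ I) = v := by
  
  have e1 : 2 * t₁ = 0 := by
    have : Ideal.Quotient.mk I (2 * X 0) = 0 := Ideal.Quotient.eq_zero_iff_mem.2
      (hI ▸ Ideal.subset_span (by simp))
    rw [ht₁, ← this, two_mul, two_mul, map_add]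
  have e2 : 2 * t₂ = 0 := by
    have : Ideal.Quotient.mk I (2 * X 1) = 0 := Ideal.Quotient.eq_zero_iff_mem.2
      (hI ▸ Ideal.subset_span (by simp))
    rw [ht₂, ← this, two_mul, two_mul, map_add]
  have e3 : t₁ ^ 2 * t₂ = t₁ * t₂ ^ 2 := by
    have : Ideal.Quotient.mk I ((X 0) ^ 2 * X 1 - X 0 * (X 1) ^ 2) = 0 :=
      Ideal.Quotient.eq_zero_iff_mem.2 (hI ▸ Ideal.subset_span (by simp))
    rw [ht₁, ht₂]; simpa [sub_eq_zero] using this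
  obtain ⟨φA, hA1, hA2⟩ := liftI I hI (Polynomial.X : F) 0 (two_F _) (two_F _) (by simp)
  obtain ⟨φB, hB1, hB2⟩ := liftI I hI (0 : F) Polynomial.X (two_F _) (two_F _) (by simp)
  obtain ⟨φC, hC1, hC2⟩ := liftI I hI (Polynomial.X : F) Polynomial.X (two_F _) (two_F _) (by ring)
  obtain ⟨ε, hε1, hε2⟩ := liftI I hI (0 : ℤ) 0 (by simp) (by simp) (by simp)
  rw [← ht₁] at hA1 hB1 hC1 hε1
  rw [← ht₂] at hA2 hB2 hC2 hε2
  have hAB : φA.comp σ = φB := by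
    apply ext2 <;> simp only [RingHom.comp_apply, ← ht₁, ← ht₂, hσ₁, hσ₂, map_add, hA1, hA2, hB1, hB2,
      add_zero]
  have hBC : φB.comp σ = φC := by
    apply ext2 <;> simp only [RingHom.comp_apply, ← ht₁, ← ht₂, hσ₁, hσ₂, map_add, hB1, hB2, hC1, hC2,
      zero_add]
  have nf : ∀ r : P ⧸ I, ∃ (n : ℤ) (p q u : Polynomial ℤ), r = n + t₁ * evl t₁ p
      + t₂ * evl t₂ q + t₁ * t₂ * evl t₁ u := by
    intro r
    obtain ⟨r, rfl⟩ := Ideal.Quotient.mk_surjective r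
    exact nfI _ t₁ t₂ ht₁.symm ht₂.symm e3 r
  have inj : ∀ r, ε r = 0 → φA r = 0 → φB r = 0 → φC r = 0 → r = 0 := by
    intro r h0 hA hB hC
    obtain ⟨n, p, q, u, rfl⟩ := nf r
    simp only [map_add, map_mul, hε1, hε2, map_intCast, zero_mul, add_zero, mul_zero] at h0
    have h0' : n = 0 := by simpa using h0
    subst h0'
    simp only [map_add, map_mul, hA1, hA2, map_intCast, zero_mul, add_zero, mul_zero,
      push φA t₁ p hA1, Int.cast_zero, zero_add] at hA
    simp only [map_add, map_mul, hB1, hB2, map_intCast, zero_mul, add_zero, mul_zero,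
      push φB t₂ q hB2, Int.cast_zero, zero_add] at hB
    have hp := (mul_eq_zero.1 hA).resolve_left Polynomial.X_ne_zero
    have hq := (mul_eq_zero.1 hB).resolve_left Polynomial.X_ne_zero
    simp only [map_add, map_mul, hC1, hC2, map_intCast,
      push φC t₂ q hC2, push φC t₁ p hC1, push φC t₁ u hC1, hp, hq, add_zero, mul_zero,
      Int.cast_zero, zero_add] at hC
    have hu := (mul_eq_zero.1 hC).resolve_left (mul_ne_zero Polynomial.X_ne_zero Polynomial.X_ne_zero)
    rw [even_kill _ _ e1 _ hp, even_kill _ _ e2 _ hq,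
      even_kill _ (t₁ * t₂) (by linear_combination t₂ * e1) _ hu]
    simp
  have inj' : ∀ r s, ε r = ε s → φA r = φA s → φB r = φB s → φC r = φC s → r = s := by
    intro r s h0 h1 h2 h3
    rw [← sub_eq_zero]
    apply inj <;> simp [*]
  have s3 : ∀ r, σ (σ (σ r)) = r := by
    have : (σ.comp σ).comp σ = RingHom.id _ := by
      apply ext2 <;> simp only [RingHom.comp_apply, RingHom.id_apply, ← ht₁, ← ht₂, hσ₁, hσ₂, map_add]
      · linear_combination e2
      · linear_combination e1 + e2
    exact fun r => congrArg (fun f : P ⧸ I →+* P ⧸ I => f r) this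
  have ew : σ w = w := by
    rw [hw]; simp only [map_add, map_mul, map_pow, hσ₁, hσ₂]
    linear_combination t₂ * e2 + t₁ * e2
  have ev : σ v = v := by
    rw [hv]; simp only [map_add, map_mul, map_pow, hσ₁, hσ₂]
    linear_combination 2 * e3 + t₂ ^ 2 * e2 + 3 * t₁ * t₂ * e2
  have wA : φA w = Polynomial.X ^ 2 := by rw [hw]; simp [hA1, hA2]
  have vA : φA v = Polynomial.X ^ 3 := by rw [hv]; simp [hA1, hA2]
  have wε : ε w = 0 := by rw [hw]; simp [hε1, hε2]
  have vε : ε v = 0 := by rw [hv]; simp [hε1, hε2]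
  have hcl : Subring.closure {w, v} ≤ RingHom.eqLocus σ (RingHom.id _) := by
    rw [Subring.closure_le]
    rintro x (rfl | rfl)
    · exact ew
    · exact ev
  have hBA : ∀ r, σ r = r → φB r = φA r := fun r hr => by rw [← hAB, RingHom.comp_apply, hr]
  have hCA : ∀ r, σ r = r → φC r = φA r := fun r hr => by
    rw [← hBA r hr, ← hBC, RingHom.comp_apply, hr]
  have hwm : w ∈ Subring.closure {w, v} := Subring.subset_closure (by simp)
  have hvm : v ∈ Subring.closure {w, v} := Subring.subset_closure (by simp)
  have lft : ∀ f : F, ∃ r ∈ Subring.closure {w, v}, ε r = 0 ∧ φA r = Polynomial.X ^ 2 * f := by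
    intro f
    induction f using Polynomial.induction_on' with
    | add p q hp hq =>
      obtain ⟨r, hr, h1, h2⟩ := hp
      obtain ⟨r', hr', h1', h2'⟩ := hq
      exact ⟨r + r', add_mem hr hr', by simp [*], by simp [*, mul_add]⟩
    | monomial n c =>
      obtain ⟨k, rfl⟩ := ZMod.intCast_surjective c
      have : ∃ g ∈ Subring.closure {w, v}, ε g = 0 ∧ φA g = Polynomial.X ^ 2 * Polynomial.X ^ n := by
        obtain ⟨m, rfl | rfl⟩ := Nat.even_or_odd' n
        · exact ⟨w * w ^ m, mul_mem hwm (pow_mem hwm m), by simp [wε], by simp [wA]; ring⟩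
        · exact ⟨v * w ^ m, mul_mem hvm (pow_mem hwm m), by simp [vε], by simp [wA, vA]; ring⟩
      obtain ⟨g, hg, h1, h2⟩ := this
      refine ⟨k * g, mul_mem (intCast_mem _ k) hg, by simp [h1], ?_⟩
      rw [map_mul, h2, map_intCast, ← Polynomial.C_mul_X_pow_eq_monomial]
      simp only [map_intCast]
      ring
  have w3 : w ^ 3 = v ^ 2 := by
    apply inj'
    · simp [wε, vε]
    · simp [wA, vA]; ring
    · rw [hBA _ (by simp [ew]), hBA _ (by simp [ev])]; simp [wA, vA]; ring
    · rw [hCA _ (by simp [ew]), hCA _ (by simp [ev])]; simp [wA, vA]; ring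
  have w2 : 2 * w = 0 := by rw [hw]; linear_combination (t₁ + t₂) * e1 + t₂ * e2
  have v2 : 2 * v = 0 := by rw [hv]; linear_combination (t₁ ^ 2 + t₁ * t₂) * e1 + t₂ ^ 2 * e2
  refine ⟨?_, ?_, ?_⟩
  · refine ⟨RingEquiv.ofRingHom σ (σ.comp σ) (RingHom.ext s3) (RingHom.ext s3), fun r => rfl, ?_⟩
    have : Fact (Nat.Prime 3) := ⟨Nat.prime_three⟩
    apply orderOf_eq_prime
    · ext r
      exact s3 r
    · intro h
      have h' := congrArg (fun f : RingAut (P ⧸ I) => φA (f t₁)) h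
      have h2 : φA (σ t₁) = φA t₁ := h'
      rw [hσ₁, hA1, hA2] at h2
      exact Polynomial.X_ne_zero h2.symm
  · refine le_antisymm ?_ hcl
    intro r hr
    have hr : σ r = r := hr
    have hb := hBA r hr
    have hc := hCA r hr
    obtain ⟨n, p, q, u, hnf⟩ := nf r
    have hA : φA r = (n : F) + Polynomial.X * p.map (Int.castRingHom (ZMod 2)) := by
      rw [hnf]; simp [push φA t₁ p hA1, hA1, hA2]
    have hB : φB r = (n : F) + Polynomial.X * q.map (Int.castRingHom (ZMod 2)) := by
      rw [hnf]; simp [push φB t₂ q hB2, hB1, hB2]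
    have hC : φC r = (n : F) + Polynomial.X * p.map (Int.castRingHom (ZMod 2))
        + Polynomial.X * q.map (Int.castRingHom (ZMod 2))
        + Polynomial.X * Polynomial.X * u.map (Int.castRingHom (ZMod 2)) := by
      rw [hnf]
      simp [push φC t₂ q hC2, push φC t₁ p hC1, push φC t₁ u hC1, hC1, hC2]
    have hE : ε r = n := by rw [hnf]; simp [hε1, hε2]
    obtain ⟨r', hr', h1, h2⟩ := lft (-u.map (Int.castRingHom (ZMod 2)))
    have hmem : (n : P ⧸ I) + r' ∈ Subring.closure {w, v} := add_mem (intCast_mem _ n) hr'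
    have hfix : σ ((n : P ⧸ I) + r') = (n : P ⧸ I) + r' := hcl hmem
    have hAA : φA r = φA ((n : P ⧸ I) + r') := by
      rw [map_add, h2, map_intCast]
      linear_combination hA + hc - hC + hB - hb
    have : r = (n : P ⧸ I) + r' := by
      apply inj'
      · simp [hE, h1]
      · exact hAA
      · rw [hb, hBA _ hfix, hAA]
      · rw [hc, hCA _ hfix, hAA]
    rw [this]
    exact hmem
  · have j1 : 2 * Ideal.Quotient.mk J (X 0) = 0 := by
      have : Ideal.Quotient.mk J (2 * X 0) = 0 := Ideal.Quotient.eq_zero_iff_mem.2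
        (hJ ▸ Ideal.subset_span (by simp))
      rw [← this, two_mul, two_mul, map_add]
    have j2 : 2 * Ideal.Quotient.mk J (X 1) = 0 := by
      have : Ideal.Quotient.mk J (2 * X 1) = 0 := Ideal.Quotient.eq_zero_iff_mem.2
        (hJ ▸ Ideal.subset_span (by simp))
      rw [← this, two_mul, two_mul, map_add]
    have j3 : Ideal.Quotient.mk J (X 0) ^ 3 = Ideal.Quotient.mk J (X 1) ^ 2 := by
      have : Ideal.Quotient.mk J ((X 0) ^ 3 - (X 1) ^ 2) = 0 :=
        Ideal.Quotient.eq_zero_iff_mem.2 (hJ ▸ Ideal.subset_span (by simp))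
      simpa [sub_eq_zero] using this
    obtain ⟨ψ, hψ0, hψ1⟩ := liftJ J hJ (⟨w, hwm⟩ : Subring.closure {w, v}) ⟨v, hvm⟩
      (Subtype.ext w2) (Subtype.ext v2) (Subtype.ext w3)
    have hinj : Function.Injective ψ := by
      rw [injective_iff_map_eq_zero]
      intro r hr
      obtain ⟨r, rfl⟩ := Ideal.Quotient.mk_surjective r
      obtain ⟨n, p, q, hn⟩ := nfJ (Ideal.Quotient.mk J) _ _ rfl rfl j3 r
      rw [hn] at hr ⊢
      let S := Subring.closure {w, v}
      let Φ : P ⧸ J →+* F := (φA.comp S.subtype).comp ψ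
      let E : P ⧸ J →+* ℤ := (ε.comp S.subtype).comp ψ
      have Φ0 : Φ (Ideal.Quotient.mk J (X 0)) = Polynomial.X ^ 2 := by simp [Φ, S, hψ0, wA]
      have Φ1 : Φ (Ideal.Quotient.mk J (X 1)) = Polynomial.X ^ 3 := by simp [Φ, S, hψ1, vA]
      have E0 : E (Ideal.Quotient.mk J (X 0)) = 0 := by simp [E, S, hψ0, wε]
      have E1 : E (Ideal.Quotient.mk J (X 1)) = 0 := by simp [E, S, hψ1, vε]
      have hΦ := congrArg (fun x => (φA.comp S.subtype) x) hr
      have hE := congrArg (fun x => (ε.comp S.subtype) x) hr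
      change Φ _ = _ at hΦ
      change E _ = _ at hE
      rw [map_zero] at hΦ hE
      simp only [map_add, map_mul, E0, E1, map_intCast, zero_mul, add_zero] at hE
      have hn0 : n = 0 := by simpa using hE
      subst hn0
      simp only [map_add, map_mul, Φ0, Φ1, map_intCast, push2 Φ _ _ Φ0, Int.cast_zero,
        zero_add] at hΦ
      have h2 : (Polynomial.X : F) ^ 2 * (Polynomial.expand (ZMod 2) 2
          (p.map (Int.castRingHom (ZMod 2))) + Polynomial.X * Polynomial.expand (ZMod 2) 2
          (q.map (Int.castRingHom (ZMod 2)))) = 0 := by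
        rw [← hΦ]; ring
      obtain ⟨hp, hq⟩ := oddeven _ _
        ((mul_eq_zero.1 h2).resolve_left (pow_ne_zero _ Polynomial.X_ne_zero))
      rw [even_kill _ _ j1 _ hp, even_kill _ _ j2 _ hq]
      simp
    have hsurj : Function.Surjective ψ := by
      have : Subring.closure {w, v} ≤ ((Subring.closure {w, v}).subtype.comp ψ).range := by
        rw [Subring.closure_le]
        rintro x (rfl | rfl)
        · exact ⟨Ideal.Quotient.mk J (X 0), by simp [hψ0]⟩
        · exact ⟨Ideal.Quotient.mk J (X 1), by simp [hψ1]⟩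
      rintro ⟨x, hx⟩
      obtain ⟨y, hy⟩ := this hx
      exact ⟨y, Subtype.ext hy⟩
    refine ⟨RingEquiv.ofBijective ψ ⟨hinj, hsurj⟩, ?_, ?_⟩
    · exact congrArg Subtype.val hψ0
    · exact congrArg Subtype.val hψ1
end

section
/- Let p be an odd prime, let g be a generator of the multiplicative group (ZMod p)ˣ, and let c ∈ ℤ be an integer whose reduction mod p equals g². Let R = ℤ[x]/(px) and let φ be the ring endomorphism of R determined by φ(x) = c·x (which is well defined on R). Then the fixed subring {r ∈ R | φ(r) = r} equals the subring of R generated by x^((p−1)/2). -/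
open Polynomial

set_option maxHeartbeats 1000000 in
/-- Let `p` be an odd prime, `g` a generator of `(ZMod p)ˣ`, and `c : ℤ` reducing to
`g²` mod `p`. In `R = ℤ[x]/(px)` (the graded character ring of `C_p`), the fixed
subring of the ring endomorphism `φ` determined by `φ(x) = c·x` is the subring
generated by `x^((p−1)/2)`. -/
theorem stmt_15 (p : ℕ) (hp : p.Prime) (hodd : Odd p)
    (g : (ZMod p)ˣ) (hg : ∀ u : (ZMod p)ˣ, u ∈ Subgroup.zpowers g)
    (c : ℤ) (hc : (c : ZMod p) = (g : ZMod p) ^ 2)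
    (I : Ideal (Polynomial ℤ)) (hI : I = Ideal.span {(p : Polynomial ℤ) * X})
    (x : Polynomial ℤ ⧸ I) (hx : x = Ideal.Quotient.mk I X)
    (φ : (Polynomial ℤ ⧸ I) →+* (Polynomial ℤ ⧸ I)) (hφ : φ x = (c : Polynomial ℤ ⧸ I) * x) :
    RingHom.eqLocus φ (RingHom.id _) = Subring.closure {x ^ ((p - 1) / 2)} := by
  have : Fact p.Prime := ⟨hp⟩
  have hord : orderOf g = p - 1 := by
    rw [orderOf_eq_card_of_forall_mem_zpowers hg, Nat.card_eq_fintype_card, ZMod.card_units]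
  obtain ⟨m, hm⟩ := hodd
  have hm2 : (p - 1) / 2 = m := by omega
  have hp2 := hp.two_le
  have hm0 : m ≠ 0 := by omega
  have hpow : ∀ n : ℕ, (p : ℤ) ∣ c ^ n - 1 ↔ m ∣ n := by
    intro n
    rw [← ZMod.intCast_zmod_eq_zero_iff_dvd]
    push_cast
    rw [hc, sub_eq_zero, ← pow_mul]
    have : ((g : ZMod p) ^ (2 * n) = 1) ↔ g ^ (2 * n) = 1 := by
      rw [← Units.val_pow_eq_pow_val, Units.val_eq_one]
    rw [this, ← orderOf_dvd_iff_pow_eq_one, hord, show p - 1 = 2 * m by omega]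
    exact Nat.mul_dvd_mul_iff_left (by norm_num)
  have hpx : (p : Polynomial ℤ ⧸ I) * x = 0 := by
    rw [hx, ← map_natCast (Ideal.Quotient.mk I), ← map_mul, Ideal.Quotient.eq_zero_iff_mem, hI]
    exact Ideal.mem_span_singleton_self _
  have hz : ∀ (a : ℤ) (n : ℕ), n ≠ 0 → (p : ℤ) ∣ a → (a : Polynomial ℤ ⧸ I) * x ^ n = 0 := by
    rintro _ n hn ⟨b, rfl⟩
    obtain ⟨k, rfl⟩ := Nat.exists_eq_succ_of_ne_zero hn
    push_cast
    rw [pow_succ]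
    linear_combination (b * x ^ k) * hpx
  rw [hm2]
  apply le_antisymm
  · intro r hr
    obtain ⟨f, rfl⟩ := Ideal.Quotient.mk_surjective r
    have hr' : φ (Ideal.Quotient.mk I f) = Ideal.Quotient.mk I f := hr
    have hcomp : φ (Ideal.Quotient.mk I f) = Ideal.Quotient.mk I (f.comp (C c * X)) := by
      have : φ.comp (Ideal.Quotient.mk I) =
          (Ideal.Quotient.mk I).comp (Polynomial.compRingHom (C c * X)) := by
        apply Polynomial.ringHom_ext
        · intro a; simp
        · simp [← hx, hφ]
      exact congrArg (fun h => h f) this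
    rw [hcomp, Ideal.Quotient.eq, hI, Ideal.mem_span_singleton] at hr'
    obtain ⟨q, hq⟩ := hr'
    have hdiv : ∀ n, (p : ℤ) ∣ f.coeff n * (c ^ n - 1) := by
      intro n
      have h := congrArg (fun h => h.coeff n) hq
      simp only [coeff_sub, comp_C_mul_X_coeff] at h
      rw [mul_assoc, ← C_eq_natCast, coeff_C_mul] at h
      exact ⟨(X * q).coeff n, by rw [← show ((p : ℕ) : ℤ) * _ = _ from rfl, mul_sub, mul_one]; exact h⟩
    have hf : Ideal.Quotient.mk I f = ∑ n ∈ f.support, (f.coeff n : Polynomial ℤ ⧸ I) * x ^ n := by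
      conv_lhs => rw [f.as_sum_support_C_mul_X_pow]
      simp [hx]
    rw [hf]
    refine Subring.sum_mem _ fun n _ => ?_
    by_cases hn : m ∣ n
    · obtain ⟨k, rfl⟩ := hn
      rw [pow_mul]
      exact Subring.mul_mem _ (intCast_mem (Subring.closure {x ^ m}) _)
        (Subring.pow_mem _ (Subring.subset_closure (Set.mem_singleton _)) _)
    · rw [hz _ n (by rintro rfl; exact hn (dvd_zero m))]
      · exact Subring.zero_mem _
      · exact ((Nat.prime_iff_prime_int.mp hp).dvd_or_dvd (hdiv n)).resolve_right
          (fun h => hn ((hpow n).1 h))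
  · rw [Subring.closure_le]
    rintro _ rfl
    change φ (x ^ m) = x ^ m
    have h := hz _ m hm0 ((hpow m).2 dvd_rfl)
    push_cast at h
    rw [map_pow, hφ, mul_pow]
    linear_combination h
end
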